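/- Consider a diagonal QCQP with a single quadratic constraint (m = 1): minimize x^T D x + 2 c^T x over x ∈ ℝ^n subject to x^T A x + 2 a^T x ≤ b, where D and A are real diagonal n×n matrices and A is positive definite, the feasible region is nonempty, and the Shor relaxation has a strictly feasible point. Then the Shor relaxation is exact, i.e., v* = c*. -/

import Mathlib

/-!
The relaxation is exact because every Shor-feasible pair `(X, x)` can be rounded to a feasible
point of the QCQP with no larger objective. Only the diagonal `z j = X j j` matters, and it
satisfies `x j ^ 2 ≤ z j`, so the problem separates over coordinates: in each coordinate, move
`(x j, z j)` along the line on which the constraint's contribution `A j j * z j + 2 * a j * x j` is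
constant. Since `A j j ≠ 0` this line is not vertical, hence it meets the parabola `z = x ^ 2` on
both sides of `x j`; the objective is affine along the line, so one of the two intersection points
does not increase it (`exists_round`). The converse inequality takes `X = x xᵀ`.
-/

/- Common definitions for diagonal QCQPs, the Shor relaxation, and the
convex relaxations, following "Exactness conditions for the Shor relaxation
of diagonal QCQPs". Optimal values are infima in the extended reals. -/

namespace DiagQCQP2011

open Matrix Finset

noncomputable section

/-- Trace inner product `Y • X` of two square matrices. -/
def traceIP {n : ℕ} (Y X : Matrix (Fin n) (Fin n) ℝ) : ℝ :=
  ∑ j, ∑ k, Y j k * X j k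

/-- Objective of the QCQP (P): `xᵀ D x + 2 cᵀ x`. -/
def qObj {n : ℕ} (D : Matrix (Fin n) (Fin n) ℝ) (c : Fin n → ℝ) (x : Fin n → ℝ) : ℝ :=
  (∑ j, ∑ k, x j * D j k * x k) + 2 * ∑ j, c j * x j

/-- Feasibility for the QCQP (P): `xᵀ Aⁱ x + 2 aᵢᵀ x ≤ bᵢ` for all `i`. -/
def qFeas {n m : ℕ} (A : Fin m → Matrix (Fin n) (Fin n) ℝ) (a : Fin m → Fin n → ℝ)
    (b : Fin m → ℝ) (x : Fin n → ℝ) : Prop :=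
  ∀ i, (∑ j, ∑ k, x j * A i j k * x k) + 2 * ∑ j, a i j * x j ≤ b i

/-- Optimal value `c*` of the QCQP (P), as an infimum in the extended reals. -/
def qVal {n m : ℕ} (D : Matrix (Fin n) (Fin n) ℝ) (A : Fin m → Matrix (Fin n) (Fin n) ℝ)
    (c : Fin n → ℝ) (a : Fin m → Fin n → ℝ) (b : Fin m → ℝ) : EReal :=
  sInf {v : EReal | ∃ x : Fin n → ℝ, qFeas A a b x ∧ v = ((qObj D c x : ℝ) : EReal)}

/-- Objective of the Shor relaxation (S): `D • X + 2 cᵀ x`. -/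
def shorObj {n : ℕ} (D : Matrix (Fin n) (Fin n) ℝ) (c : Fin n → ℝ)
    (X : Matrix (Fin n) (Fin n) ℝ) (x : Fin n → ℝ) : ℝ :=
  traceIP D X + 2 * ∑ j, c j * x j

/-- Feasibility for the Shor relaxation (S). -/
def shorFeas {n m : ℕ} (A : Fin m → Matrix (Fin n) (Fin n) ℝ) (a : Fin m → Fin n → ℝ)
    (b : Fin m → ℝ) (X : Matrix (Fin n) (Fin n) ℝ) (x : Fin n → ℝ) : Prop :=
  X.IsSymm ∧ (∀ i, traceIP (A i) X + 2 * ∑ j, a i j * x j ≤ b i) ∧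
    (X - vecMulVec x x).PosSemidef

/-- Optimal value `v*` of the Shor relaxation (S). -/
def shorVal {n m : ℕ} (D : Matrix (Fin n) (Fin n) ℝ) (A : Fin m → Matrix (Fin n) (Fin n) ℝ)
    (c : Fin n → ℝ) (a : Fin m → Fin n → ℝ) (b : Fin m → ℝ) : EReal :=
  sInf {v : EReal | ∃ (X : Matrix (Fin n) (Fin n) ℝ) (x : Fin n → ℝ),
    shorFeas A a b X x ∧ v = ((shorObj D c X x : ℝ) : EReal)}

/-- Strict feasibility (interior point) for the Shor relaxation (S). -/
def shorStrictFeas {n m : ℕ} (A : Fin m → Matrix (Fin n) (Fin n) ℝ) (a : Fin m → Fin n → ℝ)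
    (b : Fin m → ℝ) (X : Matrix (Fin n) (Fin n) ℝ) (x : Fin n → ℝ) : Prop :=
  X.IsSymm ∧ (∀ i, traceIP (A i) X + 2 * ∑ j, a i j * x j < b i) ∧
    (X - vecMulVec x x).PosDef

/-- Assumption 1: (P) is feasible, some nonnegative combination of the `Aⁱ` is
positive definite, and (S) has a strictly feasible (interior) point. -/
def Assumption1 {n m : ℕ} (A : Fin m → Matrix (Fin n) (Fin n) ℝ) (a : Fin m → Fin n → ℝ)
    (b : Fin m → ℝ) : Prop :=
  (∃ x : Fin n → ℝ, qFeas A a b x) ∧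
  (∃ y : Fin m → ℝ, (∀ i, 0 ≤ y i) ∧ (∑ i, y i • A i).PosDef) ∧
  (∃ (X : Matrix (Fin n) (Fin n) ℝ) (x : Fin n → ℝ), shorStrictFeas A a b X x)

/-- Objective of the convex relaxation (C). -/
def convObj {n : ℕ} (D : Matrix (Fin n) (Fin n) ℝ) (c : Fin n → ℝ)
    (x z : Fin n → ℝ) : ℝ :=
  (∑ j, D j j * z j) + 2 * ∑ j, c j * x j

/-- Feasibility for the convex relaxation (C). -/
def convFeas {n m : ℕ} (A : Fin m → Matrix (Fin n) (Fin n) ℝ) (a : Fin m → Fin n → ℝ)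
    (b : Fin m → ℝ) (x z : Fin n → ℝ) : Prop :=
  (∀ i, (∑ j, A i j j * z j) + 2 * ∑ j, a i j * x j ≤ b i) ∧ ∀ j, x j ^ 2 ≤ z j

/-- Optimal value `p*` of the convex relaxation (C). -/
def convVal {n m : ℕ} (D : Matrix (Fin n) (Fin n) ℝ) (A : Fin m → Matrix (Fin n) (Fin n) ℝ)
    (c : Fin n → ℝ) (a : Fin m → Fin n → ℝ) (b : Fin m → ℝ) : EReal :=
  sInf {v : EReal | ∃ x z : Fin n → ℝ,
    convFeas A a b x z ∧ v = ((convObj D c x z : ℝ) : EReal)}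

/-- KKT point of the convex relaxation (C). -/
def KKT {n m : ℕ} (D : Matrix (Fin n) (Fin n) ℝ) (A : Fin m → Matrix (Fin n) (Fin n) ℝ)
    (c : Fin n → ℝ) (a : Fin m → Fin n → ℝ) (b : Fin m → ℝ)
    (x z : Fin n → ℝ) (μ : Fin m → ℝ) (ν : Fin n → ℝ) : Prop :=
  (∀ i, 0 ≤ μ i) ∧ (∀ j, 0 ≤ ν j) ∧
  (∀ j, D j j + (∑ i, μ i * A i j j) - ν j = 0) ∧
  (∀ j, c j + (∑ i, μ i * a i j) + ν j * x j = 0) ∧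
  convFeas A a b x z ∧
  (∀ i, μ i * (b i - (∑ j, A i j j * z j) - 2 * ∑ j, a i j * x j) = 0) ∧
  (∀ j, ν j * (z j - x j ^ 2) = 0)

/-- The polyhedral set `S_k` of multipliers, whose emptiness (for all `k`)
is the exactness condition of Burer–Ye. -/
def Sk {n m : ℕ} (D : Matrix (Fin n) (Fin n) ℝ) (A : Fin m → Matrix (Fin n) (Fin n) ℝ)
    (c : Fin n → ℝ) (a : Fin m → Fin n → ℝ) (k : Fin n) : Set (Fin m → ℝ) :=
  {μ | (∀ i, 0 ≤ μ i) ∧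
       D k k + (∑ i, μ i * A i k k) = 0 ∧
       c k + (∑ i, μ i * a i k) = 0 ∧
       ∀ j, j ≠ k → 0 ≤ D j j + (∑ i, μ i * A i j j)}

/-- Partition hypothesis: `{N_h}` partitions `N`, within each class all
constraint matrices have a common diagonal value `ξ^{ih}`, and in each class the
minimal diagonal entry of `D` is attained at the unique index `j_h`. -/
def PartitionHyp {n m : ℕ} {H : Type*} (D : Matrix (Fin n) (Fin n) ℝ)
    (A : Fin m → Matrix (Fin n) (Fin n) ℝ) (Nh : H → Finset (Fin n))
    (ξ : Fin m → H → ℝ) (jh : H → Fin n) : Prop :=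
  (∀ j : Fin n, ∃! h : H, j ∈ Nh h) ∧
  (∀ i h, ∀ j ∈ Nh h, A i j j = ξ i h) ∧
  (∀ h, jh h ∈ Nh h) ∧
  (∀ h, ∀ j ∈ Nh h, j ≠ jh h → D (jh h) (jh h) < D j j)

/-- Objective of the second convex relaxation (C'). -/
def conv2Obj {n : ℕ} {H : Type*} [Fintype H] (D : Matrix (Fin n) (Fin n) ℝ)
    (c : Fin n → ℝ) (Nh : H → Finset (Fin n)) (jh : H → Fin n)
    (x : Fin n → ℝ) (w : H → ℝ) : ℝ :=
  (∑ h, D (jh h) (jh h) * w h) +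
    (∑ h, ∑ j ∈ Nh h, (D j j - D (jh h) (jh h)) * x j ^ 2) + 2 * ∑ j, c j * x j

/-- Feasibility for the second convex relaxation (C'). -/
def conv2Feas {n m : ℕ} {H : Type*} [Fintype H] (ξ : Fin m → H → ℝ)
    (a : Fin m → Fin n → ℝ) (b : Fin m → ℝ) (Nh : H → Finset (Fin n))
    (x : Fin n → ℝ) (w : H → ℝ) : Prop :=
  (∀ i, (∑ h, ξ i h * w h) + 2 * ∑ j, a i j * x j ≤ b i) ∧
  ∀ h, (∑ j ∈ Nh h, x j ^ 2) ≤ w h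

/-- Optimal value `q*` of the second convex relaxation (C'). -/
def conv2Val {n m : ℕ} {H : Type*} [Fintype H] (D : Matrix (Fin n) (Fin n) ℝ)
    (ξ : Fin m → H → ℝ) (c : Fin n → ℝ) (a : Fin m → Fin n → ℝ) (b : Fin m → ℝ)
    (Nh : H → Finset (Fin n)) (jh : H → Fin n) : EReal :=
  sInf {v : EReal | ∃ (x : Fin n → ℝ) (w : H → ℝ),
    conv2Feas ξ a b Nh x w ∧ v = ((conv2Obj D c Nh jh x w : ℝ) : EReal)}

/-- KKT point of the second convex relaxation (C'). -/
def KKT2 {n m : ℕ} {H : Type*} [Fintype H] (D : Matrix (Fin n) (Fin n) ℝ)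
    (ξ : Fin m → H → ℝ) (c : Fin n → ℝ) (a : Fin m → Fin n → ℝ) (b : Fin m → ℝ)
    (Nh : H → Finset (Fin n)) (jh : H → Fin n)
    (x : Fin n → ℝ) (w : H → ℝ) (μ : Fin m → ℝ) (γ : H → ℝ) : Prop :=
  (∀ i, 0 ≤ μ i) ∧ (∀ h, 0 ≤ γ h) ∧
  (∀ h, D (jh h) (jh h) + (∑ i, μ i * ξ i h) - γ h = 0) ∧
  (∀ h, ∀ j ∈ Nh h,
    (D j j - D (jh h) (jh h)) * x j + c j + (∑ i, μ i * a i j) + γ h * x j = 0) ∧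
  conv2Feas ξ a b Nh x w ∧
  (∀ i, μ i * (b i - (∑ h, ξ i h * w h) - 2 * ∑ j, a i j * x j) = 0) ∧
  (∀ h, γ h * (w h - ∑ j ∈ Nh h, x j ^ 2) = 0)

/-- Objective of the second convex relaxation (C') in the case `|H| = 1`
(with `j_1 = 0` scaled out; `d* = D 0 0`). -/
def conv1Obj {n : ℕ} [NeZero n] (D : Matrix (Fin n) (Fin n) ℝ) (c : Fin n → ℝ)
    (x : Fin n → ℝ) (w : ℝ) : ℝ :=
  D 0 0 * w + (∑ j, (D j j - D 0 0) * x j ^ 2) + 2 * ∑ j, c j * x j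

/-- Feasibility for the second convex relaxation (C') in the case `|H| = 1`. -/
def conv1Feas {n m : ℕ} (ξ : Fin m → ℝ) (a : Fin m → Fin n → ℝ) (b : Fin m → ℝ)
    (x : Fin n → ℝ) (w : ℝ) : Prop :=
  (∀ i, ξ i * w + 2 * ∑ j, a i j * x j ≤ b i) ∧ (∑ j, x j ^ 2) ≤ w

/-- Optimal value `q*` of the second convex relaxation (C') in the case `|H| = 1`. -/
def conv1Val {n m : ℕ} [NeZero n] (D : Matrix (Fin n) (Fin n) ℝ) (ξ : Fin m → ℝ)
    (c : Fin n → ℝ) (a : Fin m → Fin n → ℝ) (b : Fin m → ℝ) : EReal :=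
  sInf {v : EReal | ∃ (x : Fin n → ℝ) (w : ℝ),
    conv1Feas ξ a b x w ∧ v = ((conv1Obj D c x w : ℝ) : EReal)}

/-- The function `x_j(μ)` from the paper (meaningful for `j ≠ 0`, `|H| = 1`). -/
def xmu {n m : ℕ} [NeZero n] (D : Matrix (Fin n) (Fin n) ℝ) (c : Fin n → ℝ)
    (a : Fin m → Fin n → ℝ) (μ : Fin m → ℝ) (j : Fin n) : ℝ :=
  -(c j + ∑ i, μ i * a i j) / (D j j - D 0 0)

end


/-- One-coordinate rounding: a point above the parabola `z = x ^ 2` can be moved onto it, keeping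
one linear functional with nonzero `z`-coefficient fixed, without increasing another. -/
theorem exists_round {α : ℝ} (hα : α ≠ 0) (a d c x z : ℝ) (hz : x ^ 2 ≤ z) :
    ∃ y : ℝ, α * y ^ 2 + 2 * a * y = α * z + 2 * a * x ∧
      d * y ^ 2 + 2 * c * y ≤ d * z + 2 * c * x := by
  obtain ⟨p, rfl⟩ : ∃ p, a = α * p := ⟨a / α, by field_simp⟩
  -- The line meets the parabola where `(y + p) ^ 2 = z + 2 * p * x + p ^ 2`.
  set r := √(z + 2 * p * x + p ^ 2) with hr
  have hr2 : r ^ 2 = z + 2 * p * x + p ^ 2 := Real.sq_sqrt (by nlinarith [sq_nonneg (x + p)])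
  have habs : |x + p| ≤ r := Real.abs_le_sqrt (by nlinarith)
  obtain ⟨h1, h2⟩ := abs_le.mp habs
  -- On the line, the objective changes by `2 * (c - d * p) * (y - x)`.
  have key : ∀ y : ℝ, (y + p) ^ 2 = r ^ 2 → 0 ≤ (c - d * p) * (x - y) →
      α * y ^ 2 + 2 * (α * p) * y = α * z + 2 * (α * p) * x ∧
        d * y ^ 2 + 2 * c * y ≤ d * z + 2 * c * x := by
    intro y hy hs
    have hy2 : y ^ 2 = z + 2 * p * (x - y) := by linarith
    rw [hy2]
    exact ⟨by ring, by linarith⟩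
  rcases le_total 0 (c - d * p) with h | h
  · exact ⟨-p - r, key _ (by ring) (mul_nonneg h (by linarith))⟩
  · exact ⟨-p + r, key _ (by ring) (mul_nonneg_of_nonpos_of_nonpos h (by linarith))⟩

theorem traceIP_diag {n : ℕ} {M : Matrix (Fin n) (Fin n) ℝ} (hM : M.IsDiag)
    (X : Matrix (Fin n) (Fin n) ℝ) : traceIP M X = ∑ j, M j j * X j j := by
  refine Finset.sum_congr rfl fun j _ => ?_
  refine Finset.sum_eq_single j (fun k _ hk => ?_) (by simp)
  rw [hM hk.symm, zero_mul]

theorem quad_eq_traceIP {n : ℕ} (M : Matrix (Fin n) (Fin n) ℝ) (x : Fin n → ℝ) :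
    ∑ j, ∑ k, x j * M j k * x k = traceIP M (vecMulVec x x) := by
  refine Finset.sum_congr rfl fun j _ => Finset.sum_congr rfl fun k _ => ?_
  rw [vecMulVec_apply]
  ring

/-- GTRS: for a diagonal QCQP with a single quadratic constraint
whose (diagonal) matrix `A` is positive definite, if the feasible region is
nonempty and the Shor relaxation has a strictly feasible point, then the Shor
relaxation is exact: `v* = c*`. -/
theorem statement18 {n : ℕ} (hn : 0 < n)
    (D A : Matrix (Fin n) (Fin n) ℝ) (hD : D.IsDiag) (hA : A.IsDiag)
    (hApos : A.PosDef)
    (c a : Fin n → ℝ) (b : ℝ)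
    (hfeas : ∃ x : Fin n → ℝ,
      qFeas (fun _ : Fin 1 => A) (fun _ => a) (fun _ => b) x)
    (hstrict : ∃ (X : Matrix (Fin n) (Fin n) ℝ) (x : Fin n → ℝ),
      shorStrictFeas (fun _ : Fin 1 => A) (fun _ => a) (fun _ => b) X x) :
    shorVal D (fun _ : Fin 1 => A) c (fun _ => a) (fun _ => b) =
      qVal D (fun _ : Fin 1 => A) c (fun _ => a) (fun _ => b) := by
  apply le_antisymm
  · refine le_sInf ?_
    rintro v ⟨x, hx, rfl⟩
    refine sInf_le ⟨vecMulVec x x, x, ⟨?_, fun i => ?_, ?_⟩, ?_⟩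
    · ext i j
      simp [vecMulVec_apply, mul_comm]
    · rw [← quad_eq_traceIP]
      exact hx i
    · rw [sub_self]
      exact PosSemidef.zero
    · rw [qObj, shorObj, quad_eq_traceIP]
  · refine le_sInf ?_
    rintro v ⟨X, x, ⟨-, hX, hpsd⟩, rfl⟩
    have hz : ∀ j, x j ^ 2 ≤ X j j := fun j => by
      have h := hpsd.diag_nonneg (i := j)
      rw [Matrix.sub_apply, vecMulVec_apply] at h
      nlinarith
    choose y hy1 hy2 using fun j =>
      exists_round (hApos.diag_pos (i := j)).ne' (a j) (D j j) (c j) (x j) (X j j) (hz j)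
    have split : ∀ (M : Matrix (Fin n) (Fin n) ℝ) (hM : M.IsDiag) (e w : Fin n → ℝ)
        (W : Matrix (Fin n) (Fin n) ℝ), traceIP M W + 2 * ∑ j, e j * w j =
          ∑ j, (M j j * W j j + 2 * e j * w j) := fun M hM e w W => by
      rw [traceIP_diag hM, Finset.mul_sum, ← Finset.sum_add_distrib]
      exact Finset.sum_congr rfl fun j _ => by ring
    have hyfeas : qFeas (fun _ : Fin 1 => A) (fun _ => a) (fun _ => b) y := fun i => by
      refine le_trans (le_of_eq ?_) (hX i)
      rw [quad_eq_traceIP, split A hA, split A hA]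
      refine Finset.sum_congr rfl fun j _ => ?_
      rw [vecMulVec_apply, ← sq]
      exact hy1 j
    refine le_trans (sInf_le ⟨y, hyfeas, rfl⟩) (EReal.coe_le_coe_iff.mpr ?_)
    rw [qObj, shorObj, quad_eq_traceIP, split D hD, split D hD]
    refine Finset.sum_le_sum fun j _ => ?_
    rw [vecMulVec_apply, ← sq]
    exact hy2 j

end DiagQCQP2011
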